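/- Let λ, ω ∈ ℝ and let μ : ℝ → ℝ be a twice differentiable function with μ(t) > 0 for all t ≥ 0, satisfying μ''(t) = 2λ/μ(t) + 1/μ(t)³ + ω² μ(t) for all t ≥ 0. Then there exists δ > 0 such that μ(t) ≥ δ for all t ≥ 0. -/

import Mathlib

/-!
The equation is Newton's law `μ'' = -V'(μ)` for the potential
`V q = -2λ log q + 1 / (2 q²) - ω² q² / 2`. The energy `(μ')² / 2 + V(μ)` is conserved, so `V(μ)`
stays below the initial energy. Near `0⁺` the term `1 / (2 q²)` dominates both the logarithm and the
bounded quadratic term, whatever their signs; hence `V q → ∞` as `q → 0⁺`, and this infinite barrier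
keeps `μ` away from `0`.
-/

open Filter Set
open scoped Gradient InnerProductSpace Topology

section Newton

variable {E : Type*} [NormedAddCommGroup E]

/-- The energy, kinetic plus potential, of a particle of unit mass at position `x` with velocity `v`
in the potential `V`. -/
noncomputable def mechanicalEnergy (V : E → ℝ) (x v : E) : ℝ :=
  ‖v‖ ^ 2 / 2 + V x

theorem potential_le_mechanicalEnergy (V : E → ℝ) (x v : E) : V x ≤ mechanicalEnergy V x v :=
  le_add_of_nonneg_left (by positivity)

variable [InnerProductSpace ℝ E] [CompleteSpace E]

/-- Newton's equation `x'' = -∇V(x)` for a particle of unit mass, on the set of times `s`, as the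
first-order system `x' = v`, `v' = -∇V(x)`. Derivatives are taken within `s`, hence one-sided at the
endpoints of an interval. The potential is only required to be differentiable along the trajectory,
so it may be singular elsewhere. -/
structure IsNewtonianMotion (V : E → ℝ) (x v : ℝ → E) (s : Set ℝ) : Prop where
  hasDerivWithinAt_position : ∀ t ∈ s, HasDerivWithinAt x (v t) s t
  hasDerivWithinAt_velocity : ∀ t ∈ s, HasDerivWithinAt v (-∇ V (x t)) s t
  differentiableAt_potential : ∀ t ∈ s, DifferentiableAt ℝ V (x t)

namespace IsNewtonianMotion

variable {V : E → ℝ} {x v : ℝ → E} {s : Set ℝ}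

theorem hasDerivWithinAt_mechanicalEnergy (h : IsNewtonianMotion V x v s) {t : ℝ} (ht : t ∈ s) :
    HasDerivWithinAt (fun τ ↦ mechanicalEnergy V (x τ) (v τ)) 0 s t := by
  have kinetic : HasDerivWithinAt (fun τ ↦ ‖v τ‖ ^ 2 / 2) (2 * ⟪v t, -∇ V (x t)⟫_ℝ / 2) s t :=
    (h.hasDerivWithinAt_velocity t ht).norm_sq.div_const 2
  have potential : HasDerivWithinAt (fun τ ↦ V (x τ)) ⟪∇ V (x t), v t⟫_ℝ s t :=
    (h.differentiableAt_potential t ht).hasGradientAt.hasFDerivAt.comp_hasDerivWithinAt t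
      (h.hasDerivWithinAt_position t ht)
  refine (kinetic.add potential).congr_deriv ?_
  rw [inner_neg_right, real_inner_comm]
  ring

theorem mechanicalEnergy_eq (h : IsNewtonianMotion V x v s) (hs : Convex ℝ s) {t₀ t : ℝ}
    (ht₀ : t₀ ∈ s) (ht : t ∈ s) :
    mechanicalEnergy V (x t) (v t) = mechanicalEnergy V (x t₀) (v t₀) := by
  have := hs.norm_image_sub_le_of_norm_hasDerivWithin_le (C := 0)
    (fun _ hτ ↦ h.hasDerivWithinAt_mechanicalEnergy hτ) (fun _ _ ↦ norm_zero.le) ht₀ ht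
  rwa [zero_mul, norm_le_zero_iff, sub_eq_zero] at this

theorem bddAbove_potential (h : IsNewtonianMotion V x v s) (hs : Convex ℝ s) :
    BddAbove (V '' (x '' s)) := by
  obtain rfl | ⟨t₀, ht₀⟩ := s.eq_empty_or_nonempty
  · simp
  refine ⟨mechanicalEnergy V (x t₀) (v t₀), ?_⟩
  rintro _ ⟨_, ⟨t, ht, rfl⟩, rfl⟩
  exact (potential_le_mechanicalEnergy V (x t) (v t)).trans_eq (h.mechanicalEnergy_eq hs ht₀ ht)

end IsNewtonianMotion

end Newton

section Barrier

variable {α β : Type*} [Preorder β] [NoMaxOrder β] {f : α → β} {A : Set α}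

theorem eventually_notMem_of_tendsto_atTop {l : Filter α} (hf : Tendsto f l atTop)
    (hA : BddAbove (f '' A)) : ∀ᶠ q in l, q ∉ A := by
  obtain ⟨C, hC⟩ := hA
  filter_upwards [hf.eventually_gt_atTop C] with q hCq hq
  exact hCq.not_ge (hC (mem_image_of_mem f hq))

theorem exists_gt_forall_le_of_tendsto_nhdsGT [LinearOrder α] [NoMaxOrder α] [TopologicalSpace α]
    [OrderTopology α] {a : α} (hf : Tendsto f (𝓝[>] a) atTop) (hA : BddAbove (f '' A))
    (hgt : ∀ q ∈ A, a < q) : ∃ δ > a, ∀ q ∈ A, δ ≤ q := by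
  obtain ⟨δ, hδ, hδA⟩ :=
    mem_nhdsGT_iff_exists_Ioo_subset.1 (eventually_notMem_of_tendsto_atTop hf hA)
  exact ⟨δ, hδ, fun q hq ↦ not_lt.1 fun hqδ ↦ hδA ⟨hgt q hq, hqδ⟩ hq⟩

end Barrier

/-- The potential on `(0, ∞)` of the force `a / q + b / q ^ 3 + k * q`. At `q = 0` its value is the
junk `0`. -/
noncomputable def singularPotential (a b k q : ℝ) : ℝ :=
  b / 2 * (q ^ 2)⁻¹ - a * Real.log q - k / 2 * q ^ 2

namespace singularPotential

theorem hasDerivAt (a b k : ℝ) {q : ℝ} (hq : q ≠ 0) :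
    HasDerivAt (singularPotential a b k) (-(a / q + b / q ^ 3 + k * q)) q := by
  have hsq : HasDerivAt (fun r : ℝ ↦ r ^ 2) (2 * q) q := by simpa using hasDerivAt_pow 2 q
  refine ((((hsq.fun_inv (pow_ne_zero 2 hq)).const_mul (b / 2)).sub
    ((Real.hasDerivAt_log hq).const_mul a)).sub (hsq.const_mul (k / 2))).congr_deriv ?_
  field_simp
  ring

theorem tendsto_nhdsGT_zero (a k : ℝ) {b : ℝ} (hb : 0 < b) :
    Tendsto (singularPotential a b k) (𝓝[>] 0) atTop := by
  have hinv : Tendsto (fun q : ℝ ↦ (q ^ 2)⁻¹) (𝓝[>] 0) atTop := by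
    simpa only [Function.comp_def, inv_pow] using
      (tendsto_pow_atTop two_ne_zero).comp (tendsto_inv_nhdsGT_zero (𝕜 := ℝ))
  have hlog : Tendsto (fun q : ℝ ↦ Real.log q * q ^ 2) (𝓝[>] 0) (𝓝 0) := by
    simpa only [Real.rpow_two] using tendsto_log_mul_rpow_nhdsGT_zero two_pos
  have hpow : Tendsto (fun q : ℝ ↦ q ^ 4) (𝓝[>] 0) (𝓝 0) :=
    ((continuous_pow 4).tendsto' 0 0 (by simp)).mono_left nhdsWithin_le_nhds
  have hfactor : Tendsto (fun q : ℝ ↦ b / 2 - a * (Real.log q * q ^ 2) - k / 2 * q ^ 4)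
      (𝓝[>] 0) (𝓝 (b / 2)) := by
    simpa using (tendsto_const_nhds.sub (hlog.const_mul a)).sub (hpow.const_mul (k / 2))
  refine (hinv.atTop_mul_pos (half_pos hb) hfactor).congr' ?_
  filter_upwards [self_mem_nhdsWithin] with q (hq : 0 < q)
  rw [singularPotential]
  field_simp

theorem isNewtonianMotion {a b k : ℝ} {x v : ℝ → ℝ} {s : Set ℝ}
    (hx : ∀ t ∈ s, HasDerivWithinAt x (v t) s t) (hne : ∀ t ∈ s, x t ≠ 0)
    (hv : ∀ t ∈ s, HasDerivWithinAt v (a / x t + b / x t ^ 3 + k * x t) s t) :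
    IsNewtonianMotion (singularPotential a b k) x v s where
  hasDerivWithinAt_position := hx
  hasDerivWithinAt_velocity t ht := by
    rw [gradient_eq_deriv', (hasDerivAt a b k (hne t ht)).deriv, neg_neg]
    exact hv t ht
  differentiableAt_potential t ht := (hasDerivAt a b k (hne t ht)).differentiableAt

end singularPotential

theorem stmt_4_general {a b k : ℝ} (hb : 0 < b) {x v : ℝ → ℝ} {s : Set ℝ} (hs : Convex ℝ s)
    (hx : ∀ t ∈ s, HasDerivWithinAt x (v t) s t) (hpos : ∀ t ∈ s, 0 < x t)
    (hv : ∀ t ∈ s, HasDerivWithinAt v (a / x t + b / x t ^ 3 + k * x t) s t) :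
    ∃ δ > 0, ∀ t ∈ s, δ ≤ x t := by
  have hmotion : IsNewtonianMotion (singularPotential a b k) x v s :=
    singularPotential.isNewtonianMotion hx (fun t ht ↦ (hpos t ht).ne') hv
  have hbarrier : Tendsto (singularPotential a b k) (𝓝[>] 0) atTop :=
    singularPotential.tendsto_nhdsGT_zero a k hb
  simpa only [forall_mem_image] using exists_gt_forall_le_of_tendsto_nhdsGT hbarrier
    (hmotion.bddAbove_potential hs) (forall_mem_image.2 hpos)

/-- If `μ : ℝ → ℝ` is twice differentiable, positive on `[0, ∞)`, and satisfies
`μ'' = 2λ/μ + 1/μ³ + ω² μ` for all `t ≥ 0`, then `μ` is bounded away from zero on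
`[0, ∞)`: there exists `δ > 0` with `μ(t) ≥ δ` for all `t ≥ 0`. -/
theorem stmt_4 (lam om : ℝ) (μ : ℝ → ℝ)
    (hd1 : Differentiable ℝ μ) (hd2 : Differentiable ℝ (deriv μ))
    (hpos : ∀ t : ℝ, 0 ≤ t → 0 < μ t)
    (hODE : ∀ t : ℝ, 0 ≤ t →
      deriv (deriv μ) t = 2 * lam / μ t + 1 / (μ t) ^ 3 + om ^ 2 * μ t) :
    ∃ δ : ℝ, 0 < δ ∧ ∀ t : ℝ, 0 ≤ t → δ ≤ μ t :=
  stmt_4_general one_pos (convex_Ici 0) (fun t _ ↦ (hd1 t).hasDerivAt.hasDerivWithinAt) hpos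
    fun t ht ↦ hODE t ht ▸ (hd2 t).hasDerivAt.hasDerivWithinAt
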